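/- Let 𝒞 be a bicategory, X an object of 𝒞, (B, p, e) a monad on X, A : X ⟶ X a 1-morphism, and (d, q, j) a wreath from (X, B) to A. Then the 1-morphism A ≫ B carries a monad structure on X whose unit is j : 𝟙 X ⟶ A ≫ B and whose multiplication μ : (A ≫ B) ≫ (A ≫ B) ⟶ A ≫ B is given (up to the canonical coherence isomorphisms) by μ = (A ◁ (p ∘ (p ▷ B))) ∘ (q ▷ (B ≫ B)) ∘ ((A ◁ d) ▷ B); that is, μ and j satisfy the associativity and unit laws for a monad. -/

import Mathlib

/-!
Both bracketings of `μ` reduce to one normal form: first all letters `B` are moved past the letters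
`A` by `d`, then the three `A`s are merged by `q` (left pair first, with one more `d` carrying the
resulting `B` past the last `A`), and finally the product of all the `B`s is taken.

For `μ ∘ ((A ≫ B) ◁ μ)` (`wreath_assoc_left`), interchange and associativity of `p` bring out the
right side of (X3), and after it the left side of (X5), which switches from merging the right pair
of `A`s to merging the left pair. For `μ ∘ (μ ▷ (A ≫ B))` (`wreath_assoc_right`), (X1) is
the only wreath axiom used: in its threefold form `IsWreath.dist_three` it carries the product of
`B`s past `A`. The left unit
law is (X7) whiskered by `B`; the right unit law is (X4) followed by (X6) whiskered by `B`. Both end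
with the left unit law of `B`.
-/

open CategoryTheory Bicategory
open scoped CategoryTheory.Bicategory

universe w v u

variable {C : Type u} [Bicategory.{w, v} C]

/-- A monad structure on an endo-1-morphism `B : X ⟶ X` in a bicategory:
multiplication `p` and unit `e` satisfy associativity and the unit laws
up to the canonical associator and unitor isomorphisms. -/
def IsMonad {X : C} (B : X ⟶ X) (p : B ≫ B ⟶ B) (e : 𝟙 X ⟶ B) : Prop :=
  ((α_ B B B).hom ≫ (B ◁ p) ≫ p = (p ▷ B) ≫ p) ∧
  ((e ▷ B) ≫ p = (λ_ B).hom) ∧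
  ((B ◁ e) ≫ p = (ρ_ B).hom)

/-- A warping from the monad `(X, B, p, e)` to an endo-1-morphism `A : X ⟶ X`:
2-morphisms `t : A ≫ B ≫ A ⟶ A ≫ B` and `k : 𝟙 X ⟶ A ≫ B` satisfying the
three warping axioms (W1), (W2), (W3), up to the canonical coherence
isomorphisms (inserted by `⊗≫`). -/
def IsWarping {X : C} (B : X ⟶ X) (p : B ≫ B ⟶ B) (e : 𝟙 X ⟶ B) (A : X ⟶ X)
    (t : A ≫ B ≫ A ⟶ A ≫ B) (k : 𝟙 X ⟶ A ≫ B) : Prop :=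
  (𝟙 (A ≫ B ≫ A ≫ B ≫ A) ⊗≫ ((t ▷ B) ▷ A) ⊗≫ (A ◁ (p ▷ A)) ⊗≫ t
      = 𝟙 (A ≫ B ≫ A ≫ B ≫ A) ⊗≫ ((A ≫ B) ◁ t) ⊗≫ (t ▷ B) ⊗≫ (A ◁ p)) ∧
  (𝟙 (A ≫ B) ⊗≫ ((A ≫ B) ◁ k) ⊗≫ (t ▷ B) ⊗≫ (A ◁ p) = 𝟙 (A ≫ B)) ∧
  (𝟙 A ⊗≫ (k ▷ A) ⊗≫ t = 𝟙 A ⊗≫ (A ◁ e))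

/-- A wreath from the monad `(X, B, p, e)` to an endo-1-morphism `A : X ⟶ X`:
2-morphisms `d : B ≫ A ⟶ A ≫ B`, `q : A ≫ A ⟶ A ≫ B`, `j : 𝟙 X ⟶ A ≫ B`
satisfying the seven wreath axioms (X1)–(X7), up to the canonical coherence
isomorphisms (inserted by `⊗≫`). -/
def IsWreath {X : C} (B : X ⟶ X) (p : B ≫ B ⟶ B) (e : 𝟙 X ⟶ B) (A : X ⟶ X)
    (d : B ≫ A ⟶ A ≫ B) (q : A ≫ A ⟶ A ≫ B) (j : 𝟙 X ⟶ A ≫ B) : Prop :=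
  -- (X1)
  (𝟙 (B ≫ B ≫ A) ⊗≫ (p ▷ A) ⊗≫ d
      = 𝟙 (B ≫ B ≫ A) ⊗≫ (B ◁ d) ⊗≫ (d ▷ B) ⊗≫ (A ◁ p)) ∧
  -- (X2)
  (𝟙 A ⊗≫ (e ▷ A) ⊗≫ d = 𝟙 A ⊗≫ (A ◁ e)) ∧
  -- (X3)
  (𝟙 (B ≫ A ≫ A) ⊗≫ (d ▷ A) ⊗≫ (A ◁ d) ⊗≫ (q ▷ B) ⊗≫ (A ◁ p)
      = 𝟙 (B ≫ A ≫ A) ⊗≫ (B ◁ q) ⊗≫ (d ▷ B) ⊗≫ (A ◁ p)) ∧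
  -- (X4)
  (𝟙 B ⊗≫ (B ◁ j) ⊗≫ (d ▷ B) ⊗≫ (A ◁ p)
      = 𝟙 B ⊗≫ (j ▷ B) ⊗≫ (A ◁ p)) ∧
  -- (X5)
  (𝟙 (A ≫ A ≫ A) ⊗≫ (A ◁ q) ⊗≫ (q ▷ B) ⊗≫ (A ◁ p)
      = 𝟙 (A ≫ A ≫ A) ⊗≫ (q ▷ A) ⊗≫ (A ◁ d) ⊗≫ (q ▷ B) ⊗≫ (A ◁ p)) ∧
  -- (X6)
  (𝟙 A ⊗≫ (A ◁ j) ⊗≫ (q ▷ B) ⊗≫ (A ◁ p) = 𝟙 A ⊗≫ (A ◁ e)) ∧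
  -- (X7)
  (𝟙 A ⊗≫ (j ▷ A) ⊗≫ (A ◁ d) ⊗≫ (q ▷ B) ⊗≫ (A ◁ p) = 𝟙 A ⊗≫ (A ◁ e))

/-- Associativity with coherence inserted by `⊗≫`, ready for rewriting inside whiskered composites. -/
lemma IsMonad.assoc' {X : C} {B : X ⟶ X} {p : B ≫ B ⟶ B} {e : 𝟙 X ⟶ B} (hB : IsMonad B p e) :
    𝟙 (B ≫ B ≫ B) ⊗≫ B ◁ p ⊗≫ p = 𝟙 (B ≫ B ≫ B) ⊗≫ p ▷ B ⊗≫ p := by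
  calc _ = (α_ B B B).inv ≫ ((α_ B B B).hom ≫ (B ◁ p) ≫ p) := by bicategory
    _ = _ := by rw [hB.1]; bicategory

/-- In a fivefold product, multiplying the second and third factors first gives the left-nested
product. -/
lemma IsMonad.mul_inner {X : C} {B : X ⟶ X} {p : B ≫ B ⟶ B} {e : 𝟙 X ⟶ B} (hB : IsMonad B p e) :
    𝟙 (B ≫ B ≫ B ≫ B ≫ B) ⊗≫ B ◁ p ▷ B ▷ B ⊗≫ p ▷ B ▷ B ⊗≫ p ▷ B ⊗≫ p
      = 𝟙 (B ≫ B ≫ B ≫ B ≫ B) ⊗≫ p ▷ B ▷ B ▷ B ⊗≫ p ▷ B ▷ B ⊗≫ p ▷ B ⊗≫ p := by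
  calc _ = 𝟙 (B ≫ B ≫ B ≫ B ≫ B) ⊗≫ (𝟙 (B ≫ B ≫ B) ⊗≫ B ◁ p ⊗≫ p) ▷ B ▷ B ⊗≫ p ▷ B ⊗≫ p := by
        bicategory
    _ = _ := by rw [hB.assoc']; bicategory

/-- Multiplying the last three of four factors first gives the left-nested product. -/
lemma IsMonad.mul_nested {X : C} {B : X ⟶ X} {p : B ≫ B ⟶ B} {e : 𝟙 X ⟶ B} (hB : IsMonad B p e) :
    𝟙 (B ≫ B ≫ B ≫ B) ⊗≫ B ◁ (p ▷ B ≫ p) ⊗≫ p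
      = 𝟙 (B ≫ B ≫ B ≫ B) ⊗≫ p ▷ B ▷ B ⊗≫ p ▷ B ⊗≫ p := by
  calc _ = 𝟙 (B ≫ B ≫ B ≫ B) ⊗≫ B ◁ p ▷ B ⊗≫ (𝟙 (B ≫ B ≫ B) ⊗≫ B ◁ p ⊗≫ p) := by bicategory
    _ = 𝟙 (B ≫ B ≫ B ≫ B) ⊗≫ B ◁ p ▷ B ⊗≫ p ▷ B ⊗≫ p := by
        rw [hB.assoc']; bicategory
    _ = 𝟙 (B ≫ B ≫ B ≫ B) ⊗≫ (𝟙 (B ≫ B ≫ B) ⊗≫ B ◁ p ⊗≫ p) ▷ B ⊗≫ p := by bicategory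
    _ = _ := by rw [hB.assoc']; bicategory

lemma wreath_left_unit {X : C} {B A : X ⟶ X}
    {p : B ≫ B ⟶ B} {e : 𝟙 X ⟶ B} (hB : IsMonad B p e)
    {d : B ≫ A ⟶ A ≫ B} {q : A ≫ A ⟶ A ≫ B} {j : 𝟙 X ⟶ A ≫ B}
    (hX : IsWreath B p e A d q j) :
    (j ▷ (A ≫ B)) ≫ (𝟙 ((A ≫ B) ≫ (A ≫ B)) ⊗≫ ((A ◁ d) ▷ B) ⊗≫ (q ▷ (B ≫ B)) ⊗≫ (A ◁ ((p ▷ B) ≫ p)))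
      = (λ_ (A ≫ B)).hom := by
  obtain ⟨-, -, -, -, -, -, x7⟩ := hX
  calc _ = 𝟙 (𝟙 X ≫ A ≫ B) ⊗≫
        (𝟙 A ⊗≫ (j ▷ A) ⊗≫ (A ◁ d) ⊗≫ (q ▷ B) ⊗≫ (A ◁ p)) ▷ B ⊗≫ A ◁ p := by bicategory
    _ = 𝟙 (𝟙 X ≫ A ≫ B) ⊗≫ A ◁ (e ▷ B ≫ p) := by rw [x7]; bicategory
    _ = _ := by rw [hB.2.1]; bicategory

lemma wreath_right_unit {X : C} {B A : X ⟶ X}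
    {p : B ≫ B ⟶ B} {e : 𝟙 X ⟶ B} (hB : IsMonad B p e)
    {d : B ≫ A ⟶ A ≫ B} {q : A ≫ A ⟶ A ≫ B} {j : 𝟙 X ⟶ A ≫ B}
    (hX : IsWreath B p e A d q j) :
    ((A ≫ B) ◁ j) ≫ (𝟙 ((A ≫ B) ≫ (A ≫ B)) ⊗≫ ((A ◁ d) ▷ B) ⊗≫ (q ▷ (B ≫ B)) ⊗≫ (A ◁ ((p ▷ B) ≫ p)))
      = (ρ_ (A ≫ B)).hom := by
  obtain ⟨-, -, -, x4, -, x6, -⟩ := hX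
  calc _ = 𝟙 ((A ≫ B) ≫ 𝟙 X) ⊗≫ A ◁ B ◁ j ⊗≫ A ◁ d ▷ B ⊗≫ q ▷ B ▷ B ⊗≫
        A ◁ (𝟙 (B ≫ B ≫ B) ⊗≫ p ▷ B ⊗≫ p) := by bicategory
    _ = 𝟙 ((A ≫ B) ≫ 𝟙 X) ⊗≫ A ◁ B ◁ j ⊗≫ A ◁ d ▷ B ⊗≫ (q ▷ (B ≫ B) ≫ (A ≫ B) ◁ p) ⊗≫
        A ◁ p := by rw [← hB.assoc']; bicategory
    _ = 𝟙 ((A ≫ B) ≫ 𝟙 X) ⊗≫ A ◁ (𝟙 B ⊗≫ (B ◁ j) ⊗≫ (d ▷ B) ⊗≫ (A ◁ p)) ⊗≫ q ▷ B ⊗≫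
        A ◁ p := by rw [← whisker_exchange]; bicategory
    _ = 𝟙 ((A ≫ B) ≫ 𝟙 X) ⊗≫ A ◁ j ▷ B ⊗≫ ((A ≫ A) ◁ p ≫ q ▷ B) ⊗≫ A ◁ p := by
        rw [x4]; bicategory
    _ = 𝟙 ((A ≫ B) ≫ 𝟙 X) ⊗≫ A ◁ j ▷ B ⊗≫ q ▷ B ▷ B ⊗≫
        A ◁ (𝟙 (B ≫ B ≫ B) ⊗≫ B ◁ p ⊗≫ p) := by rw [whisker_exchange]; bicategory
    _ = 𝟙 ((A ≫ B) ≫ 𝟙 X) ⊗≫ (𝟙 A ⊗≫ (A ◁ j) ⊗≫ (q ▷ B) ⊗≫ (A ◁ p)) ▷ B ⊗≫ A ◁ p := by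
        rw [hB.assoc']; bicategory
    _ = 𝟙 ((A ≫ B) ≫ 𝟙 X) ⊗≫ A ◁ (e ▷ B ≫ p) := by rw [x6]; bicategory
    _ = _ := by rw [hB.2.1]; bicategory

/-- The bracketing that multiplies the last two copies of `A ≫ B` first, brought to the normal form
shared with `wreath_assoc_right`. -/
lemma wreath_assoc_left {X : C} {B A : X ⟶ X}
    {p : B ≫ B ⟶ B} {e : 𝟙 X ⟶ B} (hB : IsMonad B p e)
    {d : B ≫ A ⟶ A ≫ B} {q : A ≫ A ⟶ A ≫ B} {j : 𝟙 X ⟶ A ≫ B}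
    (hX : IsWreath B p e A d q j) :
    (α_ (A ≫ B) (A ≫ B) (A ≫ B)).hom ≫ ((A ≫ B) ◁ (𝟙 ((A ≫ B) ≫ (A ≫ B)) ⊗≫ ((A ◁ d) ▷ B) ⊗≫ (q ▷ (B ≫ B)) ⊗≫ (A ◁ ((p ▷ B) ≫ p)))) ≫
      (𝟙 ((A ≫ B) ≫ (A ≫ B)) ⊗≫ ((A ◁ d) ▷ B) ⊗≫ (q ▷ (B ≫ B)) ⊗≫ (A ◁ ((p ▷ B) ≫ p)))
      = 𝟙 (((A ≫ B) ≫ (A ≫ B)) ≫ (A ≫ B)) ⊗≫ A ◁ B ◁ A ◁ d ▷ B ⊗≫ A ◁ d ▷ A ▷ B ▷ B ⊗≫ A ◁ A ◁ d ▷ B ▷ B ⊗≫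
        q ▷ A ▷ B ▷ B ▷ B ⊗≫ A ◁ d ▷ B ▷ B ▷ B ⊗≫ q ▷ B ▷ B ▷ B ▷ B ⊗≫ A ◁ p ▷ B ▷ B ▷ B ⊗≫
        A ◁ p ▷ B ▷ B ⊗≫ A ◁ p ▷ B ⊗≫ A ◁ p := by
  obtain ⟨-, -, x3, -, x5, -, -⟩ := hX
  calc _ = 𝟙 (((A ≫ B) ≫ (A ≫ B)) ≫ (A ≫ B)) ⊗≫ A ◁ B ◁ A ◁ d ▷ B ⊗≫ A ◁ B ◁ q ▷ B ▷ B ⊗≫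
        A ◁ ((B ≫ A) ◁ (p ▷ B ≫ p) ≫ d ▷ B) ⊗≫ q ▷ B ▷ B ⊗≫ A ◁ p ▷ B ⊗≫ A ◁ p := by bicategory
    _ = 𝟙 (((A ≫ B) ≫ (A ≫ B)) ≫ (A ≫ B)) ⊗≫ A ◁ B ◁ A ◁ d ▷ B ⊗≫ A ◁ B ◁ q ▷ B ▷ B ⊗≫ A ◁ d ▷ B ▷ B ▷ B ⊗≫
        ((A ≫ A) ◁ (B ◁ (p ▷ B ≫ p)) ≫ q ▷ (B ≫ B)) ⊗≫ A ◁ p ▷ B ⊗≫ A ◁ p := by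
        rw [whisker_exchange]; bicategory
    _ = 𝟙 (((A ≫ B) ≫ (A ≫ B)) ≫ (A ≫ B)) ⊗≫ A ◁ B ◁ A ◁ d ▷ B ⊗≫ A ◁ B ◁ q ▷ B ▷ B ⊗≫ A ◁ d ▷ B ▷ B ▷ B ⊗≫
        q ▷ B ▷ B ▷ B ▷ B ⊗≫ A ◁ ((B ≫ B) ◁ (p ▷ B ≫ p) ≫ p ▷ B) ⊗≫ A ◁ p := by
        rw [whisker_exchange]; bicategory
    _ = 𝟙 (((A ≫ B) ≫ (A ≫ B)) ≫ (A ≫ B)) ⊗≫ A ◁ B ◁ A ◁ d ▷ B ⊗≫ A ◁ B ◁ q ▷ B ▷ B ⊗≫ A ◁ d ▷ B ▷ B ▷ B ⊗≫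
        q ▷ B ▷ B ▷ B ▷ B ⊗≫ A ◁ p ▷ B ▷ B ▷ B ⊗≫
        A ◁ (𝟙 (B ≫ B ≫ B ≫ B) ⊗≫ B ◁ (p ▷ B ≫ p) ⊗≫ p) := by
        rw [whisker_exchange]; bicategory
    _ = 𝟙 (((A ≫ B) ≫ (A ≫ B)) ≫ (A ≫ B)) ⊗≫ A ◁ B ◁ A ◁ d ▷ B ⊗≫ A ◁ B ◁ q ▷ B ▷ B ⊗≫ A ◁ d ▷ B ▷ B ▷ B ⊗≫
        q ▷ B ▷ B ▷ B ▷ B ⊗≫ A ◁ (𝟙 (B ≫ B ≫ B ≫ B ≫ B) ⊗≫ p ▷ B ▷ B ▷ B ⊗≫ p ▷ B ▷ B ⊗≫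
          p ▷ B ⊗≫ p) := by
        rw [hB.mul_nested]; bicategory
    _ = 𝟙 (((A ≫ B) ≫ (A ≫ B)) ≫ (A ≫ B)) ⊗≫ A ◁ B ◁ A ◁ d ▷ B ⊗≫ A ◁ B ◁ q ▷ B ▷ B ⊗≫ A ◁ d ▷ B ▷ B ▷ B ⊗≫
        (q ▷ (B ≫ B) ≫ (A ≫ B) ◁ p) ▷ B ▷ B ⊗≫ A ◁ p ▷ B ▷ B ⊗≫ A ◁ p ▷ B ⊗≫ A ◁ p := by
        rw [← hB.mul_inner]; bicategory
    _ = 𝟙 (((A ≫ B) ≫ (A ≫ B)) ≫ (A ≫ B)) ⊗≫ A ◁ B ◁ A ◁ d ▷ B ⊗≫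
        A ◁ (𝟙 (B ≫ A ≫ A) ⊗≫ (B ◁ q) ⊗≫ (d ▷ B) ⊗≫ (A ◁ p)) ▷ B ▷ B ⊗≫
        q ▷ B ▷ B ▷ B ⊗≫ A ◁ p ▷ B ▷ B ⊗≫ A ◁ p ▷ B ⊗≫ A ◁ p := by
        rw [← whisker_exchange]; bicategory
    _ = 𝟙 (((A ≫ B) ≫ (A ≫ B)) ≫ (A ≫ B)) ⊗≫ A ◁ B ◁ A ◁ d ▷ B ⊗≫ A ◁ d ▷ A ▷ B ▷ B ⊗≫ A ◁ A ◁ d ▷ B ▷ B ⊗≫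
        A ◁ q ▷ B ▷ B ▷ B ⊗≫ ((A ≫ A) ◁ p ≫ q ▷ B) ▷ B ▷ B ⊗≫
        A ◁ p ▷ B ▷ B ⊗≫ A ◁ p ▷ B ⊗≫ A ◁ p := by
        rw [← x3]; bicategory
    _ = 𝟙 (((A ≫ B) ≫ (A ≫ B)) ≫ (A ≫ B)) ⊗≫ A ◁ B ◁ A ◁ d ▷ B ⊗≫ A ◁ d ▷ A ▷ B ▷ B ⊗≫ A ◁ A ◁ d ▷ B ▷ B ⊗≫
        A ◁ q ▷ B ▷ B ▷ B ⊗≫ q ▷ B ▷ B ▷ B ▷ B ⊗≫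
        A ◁ (𝟙 (B ≫ B ≫ B ≫ B ≫ B) ⊗≫ B ◁ p ▷ B ▷ B ⊗≫ p ▷ B ▷ B ⊗≫ p ▷ B ⊗≫ p) := by
        rw [whisker_exchange]; bicategory
    _ = 𝟙 (((A ≫ B) ≫ (A ≫ B)) ≫ (A ≫ B)) ⊗≫ A ◁ B ◁ A ◁ d ▷ B ⊗≫ A ◁ d ▷ A ▷ B ▷ B ⊗≫ A ◁ A ◁ d ▷ B ▷ B ⊗≫
        (𝟙 (A ≫ A ≫ A) ⊗≫ (A ◁ q) ⊗≫ (q ▷ B) ⊗≫ (A ◁ p)) ▷ B ▷ B ▷ B ⊗≫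
        A ◁ p ▷ B ▷ B ⊗≫ A ◁ p ▷ B ⊗≫ A ◁ p := by
        rw [hB.mul_inner]; bicategory
    _ = _ := by rw [x5]; bicategory

/-- Axiom (X1) for the threefold product: the action `d` of `B ≫ B ≫ B` multiplied down to `B` can
be carried out one factor at a time. -/
lemma IsWreath.dist_three {X : C} {B A : X ⟶ X}
    {p : B ≫ B ⟶ B} {e : 𝟙 X ⟶ B}
    {d : B ≫ A ⟶ A ≫ B} {q : A ≫ A ⟶ A ≫ B} {j : 𝟙 X ⟶ A ≫ B}
    (hX : IsWreath B p e A d q j) :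
    𝟙 (B ≫ B ≫ B ≫ A) ⊗≫ (p ▷ B ≫ p) ▷ A ⊗≫ d
      = 𝟙 (B ≫ B ≫ B ≫ A) ⊗≫ B ◁ B ◁ d ⊗≫ B ◁ d ▷ B ⊗≫ d ▷ B ▷ B ⊗≫ A ◁ (p ▷ B ≫ p) := by
  have x1 := hX.1
  calc _ = 𝟙 (B ≫ B ≫ B ≫ A) ⊗≫ p ▷ B ▷ A ⊗≫ (𝟙 (B ≫ B ≫ A) ⊗≫ (p ▷ A) ⊗≫ d) := by bicategory
    _ = 𝟙 (B ≫ B ≫ B ≫ A) ⊗≫ (p ▷ (B ≫ A) ≫ B ◁ d) ⊗≫ d ▷ B ⊗≫ A ◁ p := by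
        rw [x1]; bicategory
    _ = 𝟙 (B ≫ B ≫ B ≫ A) ⊗≫ B ◁ B ◁ d ⊗≫ (𝟙 (B ≫ B ≫ A) ⊗≫ (p ▷ A) ⊗≫ d) ▷ B ⊗≫ A ◁ p := by
        rw [← whisker_exchange]; bicategory
    _ = _ := by rw [x1]; bicategory

/-- The bracketing that multiplies the first two copies of `A ≫ B` first, brought to the normal form
shared with `wreath_assoc_left`. -/
lemma wreath_assoc_right {X : C} {B A : X ⟶ X}
    {p : B ≫ B ⟶ B} {e : 𝟙 X ⟶ B} (hB : IsMonad B p e)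
    {d : B ≫ A ⟶ A ≫ B} {q : A ≫ A ⟶ A ≫ B} {j : 𝟙 X ⟶ A ≫ B}
    (hX : IsWreath B p e A d q j) :
    ((𝟙 ((A ≫ B) ≫ (A ≫ B)) ⊗≫ ((A ◁ d) ▷ B) ⊗≫ (q ▷ (B ≫ B)) ⊗≫ (A ◁ ((p ▷ B) ≫ p))) ▷ (A ≫ B)) ≫
      (𝟙 ((A ≫ B) ≫ (A ≫ B)) ⊗≫ ((A ◁ d) ▷ B) ⊗≫ (q ▷ (B ≫ B)) ⊗≫ (A ◁ ((p ▷ B) ≫ p)))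
      = 𝟙 (((A ≫ B) ≫ (A ≫ B)) ≫ (A ≫ B)) ⊗≫ A ◁ B ◁ A ◁ d ▷ B ⊗≫ A ◁ d ▷ A ▷ B ▷ B ⊗≫ A ◁ A ◁ d ▷ B ▷ B ⊗≫
        q ▷ A ▷ B ▷ B ▷ B ⊗≫ A ◁ d ▷ B ▷ B ▷ B ⊗≫ q ▷ B ▷ B ▷ B ▷ B ⊗≫ A ◁ p ▷ B ▷ B ▷ B ⊗≫
        A ◁ p ▷ B ▷ B ⊗≫ A ◁ p ▷ B ⊗≫ A ◁ p := by
  calc _ = 𝟙 (((A ≫ B) ≫ (A ≫ B)) ≫ (A ≫ B)) ⊗≫ A ◁ d ▷ B ▷ A ▷ B ⊗≫ q ▷ B ▷ B ▷ A ▷ B ⊗≫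
        A ◁ (𝟙 (B ≫ B ≫ B ≫ A) ⊗≫ (p ▷ B ≫ p) ▷ A ⊗≫ d) ▷ B ⊗≫ q ▷ B ▷ B ⊗≫
        A ◁ p ▷ B ⊗≫ A ◁ p := by bicategory
    _ = 𝟙 (((A ≫ B) ≫ (A ≫ B)) ≫ (A ≫ B)) ⊗≫ A ◁ d ▷ B ▷ A ▷ B ⊗≫
        (q ▷ (B ≫ B ≫ A) ≫ (A ≫ B) ◁ (B ◁ d ⊗≫ d ▷ B)) ▷ B ⊗≫
        A ◁ d ▷ B ▷ B ▷ B ⊗≫ ((A ≫ A) ◁ (p ▷ B ≫ p) ≫ q ▷ B) ▷ B ⊗≫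
        A ◁ p ▷ B ⊗≫ A ◁ p := by rw [hX.dist_three]; bicategory
    _ = 𝟙 (((A ≫ B) ≫ (A ≫ B)) ≫ (A ≫ B)) ⊗≫ A ◁ (d ▷ (B ≫ A) ≫ (A ≫ B) ◁ d) ▷ B ⊗≫ A ◁ A ◁ d ▷ B ▷ B ⊗≫
        q ▷ A ▷ B ▷ B ▷ B ⊗≫
        A ◁ d ▷ B ▷ B ▷ B ⊗≫ ((A ≫ A) ◁ (p ▷ B ≫ p) ≫ q ▷ B) ▷ B ⊗≫
        A ◁ p ▷ B ⊗≫ A ◁ p := by rw [← whisker_exchange q]; bicategory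
    _ = 𝟙 (((A ≫ B) ≫ (A ≫ B)) ≫ (A ≫ B)) ⊗≫ A ◁ B ◁ A ◁ d ▷ B ⊗≫ A ◁ d ▷ A ▷ B ▷ B ⊗≫ A ◁ A ◁ d ▷ B ▷ B ⊗≫
        q ▷ A ▷ B ▷ B ▷ B ⊗≫
        A ◁ d ▷ B ▷ B ▷ B ⊗≫ ((A ≫ A) ◁ (p ▷ B ≫ p) ≫ q ▷ B) ▷ B ⊗≫
        A ◁ p ▷ B ⊗≫ A ◁ p := by rw [← whisker_exchange d]; bicategory
    _ = 𝟙 (((A ≫ B) ≫ (A ≫ B)) ≫ (A ≫ B)) ⊗≫ A ◁ B ◁ A ◁ d ▷ B ⊗≫ A ◁ d ▷ A ▷ B ▷ B ⊗≫ A ◁ A ◁ d ▷ B ▷ B ⊗≫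
        q ▷ A ▷ B ▷ B ▷ B ⊗≫ A ◁ d ▷ B ▷ B ▷ B ⊗≫ q ▷ B ▷ B ▷ B ▷ B ⊗≫
        A ◁ (𝟙 (B ≫ B ≫ B ≫ B) ⊗≫ B ◁ (p ▷ B ≫ p) ⊗≫ p) ▷ B ⊗≫ A ◁ p := by
        rw [whisker_exchange q]; bicategory
    _ = _ := by rw [hB.mul_nested]; bicategory

/-- A wreath `(d, q, j)` from `(X, B)` to `A` induces a monad
structure on `A ≫ B` with unit `j` and multiplication
`μ = (A ◁ (p ∘ (p ▷ B))) ∘ (q ▷ (B ≫ B)) ∘ ((A ◁ d) ▷ B)` (up to the canonical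
coherence isomorphisms). -/
theorem wreath_gives_monad_on_comp {X : C} (B A : X ⟶ X)
    (p : B ≫ B ⟶ B) (e : 𝟙 X ⟶ B) (hB : IsMonad B p e)
    (d : B ≫ A ⟶ A ≫ B) (q : A ≫ A ⟶ A ≫ B) (j : 𝟙 X ⟶ A ≫ B)
    (hX : IsWreath B p e A d q j)
    (μ : (A ≫ B) ≫ (A ≫ B) ⟶ A ≫ B)
    (hμ : μ = 𝟙 ((A ≫ B) ≫ (A ≫ B)) ⊗≫ ((A ◁ d) ▷ B) ⊗≫ (q ▷ (B ≫ B))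
        ⊗≫ (A ◁ ((p ▷ B) ≫ p))) :
    IsMonad (A ≫ B) μ j := by
  subst hμ
  exact ⟨(wreath_assoc_left hB hX).trans (wreath_assoc_right hB hX).symm,
    wreath_left_unit hB hX, wreath_right_unit hB hX⟩
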